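/- Let M be a finite set, let J be a job set over M, and let J_S ⊆ J be a subset. Let β ≥ 1 be a real number with |J| ≤ β·|J_S|, let l and L be positive integers, and let l' be an integer with l' ≥ 4·β·l. Let h : J → {0,…,L−1} be a function whose restriction to J_S is (L,l)-good for the job set J_S. Let (D_{T,m}), indexed by T ∈ {0,…,2L−1} and m ∈ M, be a family of pairwise disjoint finite sets of pairs (j,i) with j ∈ J and 0 ≤ i < len(j), such that: (i) seq(j)_i = m and h(j) + i = T for every (j,i) ∈ D_{T,m}; (ii) each job j ∈ J occurs in at most one pair over all the sets; (iii) every set D_{T,m} is either empty or has size strictly greater than l'. Then the number of jobs of J_S that occur in some pair of some D_{T,m} is at most (3/4)·|J_S|. -/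

import Mathlib

open Finset

/-- A bad pattern for the job set `JS` (a finite subset of the job-index type `ι`) with
machine sequences `seq` and parameters `L`, `l`. -/
def IsBadPatternOn {M ι : Type*} [Fintype M] (JS : Finset ι) (seq : ι → List M)
    (L l : ℕ) (B : Fin (2 * L) → M → Finset (ι × ℕ)) : Prop :=
  (∀ T m, ∀ p ∈ B T m, p.1 ∈ JS ∧ (seq p.1)[p.2]? = some m) ∧
  (∀ T m T' m', ∀ p ∈ B T m, ∀ p' ∈ B T' m', p.1 = p'.1 → T = T' ∧ m = m' ∧ p = p') ∧
  (∀ T m, B T m = ∅ ∨ l < (B T m).card) ∧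
  JS.card < 2 * ∑ T, ∑ m, (B T m).card

/-- The bad pattern `B` occurs for `h` if `h(j) + i = T` for all `T`, `m`, `(j,i) ∈ B T m`. -/
def PatternOccursOn {M ι : Type*} [Fintype M]
    {L : ℕ} (B : Fin (2 * L) → M → Finset (ι × ℕ)) (h : ι → Fin L) : Prop :=
  ∀ T m, ∀ p ∈ B T m, (h p.1 : ℕ) + p.2 = (T : ℕ)

/-- Let `J` be a job set (the finite type `ι` with sequences `seq`) and `J_S ⊆ J` a subset
with `|J| ≤ β·|J_S|` for some `β ≥ 1`. Let `l' ≥ 4·β·l` and let `h` be a hash function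
whose restriction to `J_S` is `(L,l)`-good for `J_S`. If `(D_{T,m})` is a family of sets
of (job, position) pairs such that (i) `seq(j)_i = m` and `h(j)+i = T` for `(j,i) ∈ D T m`,
(ii) each job occurs in at most one pair over all the sets, and (iii) every set is empty
or has size `> l'`, then at most `(3/4)·|J_S|` jobs of `J_S` occur in some pair of some
`D_{T,m}`. -/
theorem dropped_good_jobs_le {M ι : Type*} [Fintype M] [Fintype ι]
    (seq : ι → List M) (JS : Finset ι)
    (β : ℝ) (hβ : 1 ≤ β) (hJβ : (Fintype.card ι : ℝ) ≤ β * (JS.card : ℝ))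
    (L l : ℕ) (hL0 : 0 < L) (hl0 : 0 < l)
    (l' : ℕ) (hl' : 4 * β * (l : ℝ) ≤ (l' : ℝ))
    (h : ι → Fin L)
    (hgood : ∀ B : Fin (2 * L) → M → Finset (ι × ℕ),
      IsBadPatternOn JS seq L l B → ¬ PatternOccursOn B h)
    (D : Fin (2 * L) → M → Finset (ι × ℕ))
    (hD1 : ∀ T m, ∀ p ∈ D T m, (seq p.1)[p.2]? = some m ∧ (h p.1 : ℕ) + p.2 = (T : ℕ))
    (hD2 : ∀ T m T' m', ∀ p ∈ D T m, ∀ p' ∈ D T' m', p.1 = p'.1 → T = T' ∧ m = m' ∧ p = p')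
    (hD3 : ∀ T m, D T m = ∅ ∨ l' < (D T m).card) :
    ({j ∈ (JS : Set ι) | ∃ T m i, (j, i) ∈ D T m}.ncard : ℝ) ≤
      3 / 4 * (JS.card : ℝ) := by
  classical
  let E : Fin (2 * L) → M → Finset (ι × ℕ) := fun T m => (D T m).filter (fun p => p.1 ∈ JS)
  let B : Fin (2 * L) → M → Finset (ι × ℕ) := fun T m => if l < (E T m).card then E T m else ∅
  have hBE : ∀ T m, B T m ⊆ E T m := by
    intro T m
    by_cases hc : l < (E T m).card
    · simp [B, hc]
    · simp [B, hc]
  have hED : ∀ T m, E T m ⊆ D T m := fun T m => Finset.filter_subset _ _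
  have hB : 2 * ∑ T, ∑ m, (B T m).card ≤ JS.card := by
    by_contra hcon
    refine hgood B ⟨?_, ?_, ?_, not_le.mp hcon⟩ ?_
    · intro T m p hp
      have h1 := hBE T m hp
      exact ⟨(Finset.mem_filter.mp h1).2, (hD1 T m p (hED T m h1)).1⟩
    · intro T m T' m' p hp p' hp' hh
      exact hD2 T m T' m' p (hED T m (hBE T m hp)) p' (hED T' m' (hBE T' m' hp')) hh
    · intro T m
      by_cases hc : l < (E T m).card
      · right
        simpa [B, hc] using hc
      · left
        simp [B, hc]
    · intro T m p hp
      exact (hD1 T m p (hED T m (hBE T m hp))).2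
  have hDc : ∑ T, ∑ m, (D T m).card ≤ Fintype.card ι := by
    have h1 : ∑ T, ∑ m, (D T m).card
        = ((Finset.univ : Finset (Fin (2 * L) × M)).sigma (fun x => D x.1 x.2)).card := by
      rw [Finset.card_sigma, Fintype.sum_prod_type]
    rw [h1, ← Finset.card_univ]
    refine Finset.card_le_card_of_injOn (fun x => x.2.1) (fun _ _ => Finset.mem_univ _) ?_
    rintro ⟨⟨T, m⟩, p⟩ hp ⟨⟨T', m'⟩, p'⟩ hp' hh
    simp only [Finset.coe_sigma, Set.mem_sigma_iff, Finset.mem_coe] at hp hp'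
    obtain ⟨rfl, rfl, rfl⟩ := hD2 T m T' m' p hp.2 p' hp'.2 hh
    rfl
  have hset : {j ∈ (JS : Set ι) | ∃ T m i, (j, i) ∈ D T m}.ncard ≤ ∑ T, ∑ m, (E T m).card := by
    have hsub : {j ∈ (JS : Set ι) | ∃ T m i, (j, i) ∈ D T m} ⊆
        (((Finset.univ.biUnion fun T => Finset.univ.biUnion fun m => E T m).image
          Prod.fst : Finset ι) : Set ι) := by
      rintro j ⟨hj, T, m, i, hi⟩
      rw [Finset.mem_coe, Finset.mem_image]
      refine ⟨(j, i), ?_, rfl⟩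
      simp only [Finset.mem_biUnion, Finset.mem_univ, true_and]
      exact ⟨T, m, Finset.mem_filter.mpr ⟨hi, hj⟩⟩
    refine (Set.ncard_le_ncard hsub (Finset.finite_toSet _)).trans ?_
    rw [Set.ncard_coe_finset]
    refine Finset.card_image_le.trans (Finset.card_biUnion_le.trans ?_)
    exact Finset.sum_le_sum fun T _ => Finset.card_biUnion_le
  have hpt : ∀ T m, 4 * β * ((E T m).card : ℝ) ≤ 4 * β * ((B T m).card : ℝ) + (D T m).card := by
    intro T m
    by_cases hc : l < (E T m).card
    · simp [B, hc]
    · rcases hD3 T m with h0 | h0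
      · have : E T m = ∅ := Finset.subset_empty.mp (h0 ▸ hED T m)
        rw [this]
        simp only [Finset.card_empty, Nat.cast_zero, mul_zero]
        positivity
      · have h2 : ((E T m).card : ℝ) ≤ l := by exact_mod_cast not_lt.mp hc
        have h3 : (l' : ℝ) < (D T m).card := by exact_mod_cast h0
        have h4 : 4 * β * ((E T m).card : ℝ) ≤ 4 * β * l := by gcongr
        have h5 : 0 ≤ 4 * β * ((B T m).card : ℝ) := by positivity
        linarith
  have hsum : 4 * β * (∑ T, ∑ m, ((E T m).card : ℝ)) ≤
      4 * β * (∑ T, ∑ m, ((B T m).card : ℝ)) + ∑ T, ∑ m, ((D T m).card : ℝ) := by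
    simp only [Finset.mul_sum, ← Finset.sum_add_distrib]
    exact Finset.sum_le_sum fun T _ => Finset.sum_le_sum fun m _ => hpt T m
  have hB' : 2 * ∑ T, ∑ m, ((B T m).card : ℝ) ≤ JS.card := by exact_mod_cast hB
  have hDc' : ∑ T, ∑ m, ((D T m).card : ℝ) ≤ Fintype.card ι := by exact_mod_cast hDc
  have hset' : ({j ∈ (JS : Set ι) | ∃ T m i, (j, i) ∈ D T m}.ncard : ℝ) ≤
      ∑ T, ∑ m, ((E T m).card : ℝ) := by exact_mod_cast hset
  refine hset'.trans ?_
  have hb : 0 < 4 * β := by linarith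
  refine le_of_mul_le_mul_left ?_ hb
  have h6 := mul_le_mul_of_nonneg_left hB' hb.le
  nlinarith
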